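/- Asymptotically almost all λυ-terms contain a nested substitution: if t̄(n) denotes the number of λυ-terms of size n containing no subterm of the form a[b/] with b impure (i.e., b containing a closure), then t̄(n)/t(n) → 0 as n → ∞. -/

import Mathlib

open Finset Filter

mutual
inductive Tm : Type
  | idx : Nat → Tm
  | lam : Tm → Tm
  | app : Tm → Tm → Tm
  | clos : Tm → Subst → Tm
inductive Subst : Type
  | slash : Tm → Subst
  | lift : Subst → Subst
  | shift : Subst
end

mutual
/-- Natural size of a λυ-term: every constructor weighs 1; index n has size n+1. -/
def Tm.size : Tm → Nat
  | .idx n => n + 1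
  | .lam a => Tm.size a + 1
  | .app a b => Tm.size a + Tm.size b + 1
  | .clos a s => Tm.size a + Subst.size s + 1
/-- Natural size of an explicit substitution. -/
def Subst.size : Subst → Nat
  | .slash a => Tm.size a + 1
  | .lift s => Subst.size s + 1
  | .shift => 1
end

/-- Number of λυ-terms of size `n`. -/
noncomputable def tcount (n : ℕ) : ℕ := Nat.card {a : Tm // Tm.size a = n}

/-- Number of explicit substitutions of size `n`. -/
noncomputable def scount (n : ℕ) : ℕ := Nat.card {s : Subst // Subst.size s = n}

/-- A λυ-term is impure if it contains a closure constructor. -/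
def Tm.impure : Tm → Bool
  | .idx _ => false
  | .lam a => Tm.impure a
  | .app a b => Tm.impure a || Tm.impure b
  | .clos _ _ => true

mutual
/-- A λυ-term contains no nested substitution: no subterm a[b/] with b impure. -/
def Tm.noNested : Tm → Bool
  | .idx _ => true
  | .lam a => Tm.noNested a
  | .app a b => Tm.noNested a && Tm.noNested b
  | .clos a s => Tm.noNested a && Subst.noNested s
def Subst.noNested : Subst → Bool
  | .slash b => !Tm.impure b && Tm.noNested b
  | .lift s => Subst.noNested s
  | .shift => true
end

/-- Number of λυ-terms of size n with no nested substitution. -/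
noncomputable def tbar (n : ℕ) : ℕ :=
  Nat.card {a : Tm // Tm.size a = n ∧ Tm.noNested a = true}


namespace Nest

open scoped ENNReal NNReal

/-- Size-raising map on terms whose image is the set of positive indices and closures. -/
def g : Tm → Tm
  | .idx n => .idx (n + 1)
  | .lam a => .clos a .shift
  | .app a b => .clos a (.slash b)
  | .clos a s => .clos a (.lift s)

theorem g_size (a : Tm) : (g a).size = a.size + 1 := by
  cases a <;> simp [g, Tm.size, Subst.size] <;> omega

theorem g_inj {a b : Tm} (h : g a = g b) : a = b := by
  cases a <;> cases b <;> simp_all [g]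

def isNil : BinaryTree Unit → Bool
  | .nil => true
  | .node _ _ _ => false

def comb : Bool → Bool → Tm → Tm → Tm
  | true, true, _, _ => .idx 0
  | false, true, a, _ => .lam a
  | true, false, _, b => g b
  | false, false, a, b => .app a b

def F : BinaryTree Unit → Tm
  | .nil => .idx 0
  | .node _ l r => comb (isNil l) (isNil r) (F l) (F r)

theorem isNil_nil : isNil .nil = true := rfl

theorem isNil_iff {t : BinaryTree Unit} : isNil t = true ↔ t = .nil := by
  cases t <;> simp [isNil]

theorem F_size (t : BinaryTree Unit) (h : isNil t = false) : (F t).size = t.numNodes := by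
  induction t with
  | nil => simp [isNil] at h
  | node u l r ihl ihr =>
    cases hl : isNil l <;> cases hr : isNil r
    · simp [F, hl, hr, comb, Tm.size, BinaryTree.numNodes, ihl hl, ihr hr]
    · rw [isNil_iff] at hr
      subst hr
      simp [F, hl, isNil_nil, comb, Tm.size, BinaryTree.numNodes, ihl hl]
    · rw [isNil_iff] at hl
      subst hl
      simp [F, hr, isNil_nil, comb, g_size, BinaryTree.numNodes, ihr hr]
    · rw [isNil_iff] at hl hr
      subst hl hr
      simp [F, isNil, comb, Tm.size, BinaryTree.numNodes]

theorem g_ne_idx (a : Tm) : g a ≠ .idx 0 := by cases a <;> simp [g]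
theorem g_ne_lam (a b : Tm) : g a ≠ .lam b := by cases a <;> simp [g]
theorem g_ne_app (a b c : Tm) : g a ≠ .app b c := by cases a <;> simp [g]

theorem F_inj (t : BinaryTree Unit) : ∀ (t' : BinaryTree Unit), isNil t = false →
    isNil t' = false → F t = F t' → t = t' := by
  induction t with
  | nil => intro t' h; simp [isNil] at h
  | node u l r ihl ihr =>
    intro t' _ h' hF
    cases t' with
    | nil => simp [isNil] at h'
    | node u' l' r' =>
      simp only [F] at hF
      have nn : ∀ {x : BinaryTree Unit}, isNil x = true → x = .nil := isNil_iff.1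
      cases hl : isNil l <;> cases hr : isNil r <;> cases hl' : isNil l' <;>
        cases hr' : isNil r' <;> simp only [hl, hr, hl', hr', comb] at hF
      all_goals first
        | (exfalso; simp at hF; done)
        | exact absurd hF (g_ne_idx _)
        | exact absurd hF (g_ne_lam _ _)
        | exact absurd hF (g_ne_app _ _ _)
        | exact absurd hF.symm (g_ne_idx _)
        | exact absurd hF.symm (g_ne_lam _ _)
        | exact absurd hF.symm (g_ne_app _ _ _)
        | skip
      · injection hF with h1 h2
        rw [ihl _ hl hl' h1, ihr _ hr hr' h2]
      · injection hF with h1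
        rw [ihl _ hl hl' h1, nn hr, nn hr']
      · rw [ihr _ hr hr' (g_inj hF), nn hl, nn hl']
      · rw [nn hr, nn hr', nn hl, nn hl']

theorem F_surj (n : ℕ) : ∀ a : Tm, a.size = n → ∃ t, isNil t = false ∧ F t = a := by
  have key : ∀ a b : Tm, g b = a → (∃ t, isNil t = false ∧ F t = b) →
      ∃ t, isNil t = false ∧ F t = a := by
    rintro a b rfl ⟨t, ht, rfl⟩
    exact ⟨.node () .nil t, rfl, by simp [F, comb, ht, isNil_nil]⟩
  induction n using Nat.strong_induction_on with
  | _ n ih =>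
    intro a ha
    match a, ha with
    | .idx 0, ha => exact ⟨.node () .nil .nil, rfl, rfl⟩
    | .idx (k + 1), ha =>
      refine key _ (.idx k) rfl (ih _ ?_ _ rfl)
      simp only [Tm.size] at *; omega
    | .lam b, ha =>
      obtain ⟨t, ht, rfl⟩ := ih b.size (by simp only [Tm.size] at *; omega) b rfl
      exact ⟨.node () t .nil, rfl, by simp [F, comb, ht, isNil_nil]⟩
    | .app b c, ha =>
      obtain ⟨t, ht, rfl⟩ := ih b.size (by simp only [Tm.size] at *; omega) b rfl
      obtain ⟨t', ht', rfl⟩ := ih c.size (by simp only [Tm.size] at *; omega) c rfl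
      exact ⟨.node () t t', rfl, by simp [F, comb, ht, ht']⟩
    | .clos b .shift, ha =>
      refine key _ (.lam b) rfl (ih _ ?_ _ rfl)
      simp only [Tm.size, Subst.size] at *; omega
    | .clos b (.slash c), ha =>
      refine key _ (.app b c) rfl (ih _ ?_ _ rfl)
      simp only [Tm.size, Subst.size] at *; omega
    | .clos b (.lift s), ha =>
      refine key _ (.clos b s) rfl (ih _ ?_ _ rfl)
      simp only [Tm.size, Subst.size] at *; omega

theorem fin_size (n : ℕ) : {a : Tm | a.size = n}.Finite := by
  refine ((BinaryTree.treesOfNumNodesEq n).finite_toSet.image F).subset ?_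
  intro a ha
  obtain ⟨t, ht, rfl⟩ := F_surj _ a rfl
  refine ⟨t, ?_, rfl⟩
  have h : (F t).size = n := ha
  rw [F_size t ht] at h
  simp [h]

theorem catalan_le (n : ℕ) (hn : 0 < n) : catalan n ≤ tcount n := by
  have h1 : tcount n = {a : Tm | a.size = n}.ncard := rfl
  rw [h1, ← BinaryTree.treesOfNumNodesEq_card_eq_catalan, ← Set.ncard_coe_finset]
  have nn : ∀ t ∈ (BinaryTree.treesOfNumNodesEq n : Set (BinaryTree Unit)), isNil t = false := by
    intro t ht
    have ht : t.numNodes = n := by simpa using ht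
    cases t with
    | nil => simp [BinaryTree.numNodes] at ht; omega
    | node => rfl
  refine Set.ncard_le_ncard_of_injOn F ?_ ?_ (fin_size n)
  · intro t ht
    have h := F_size t (nn t ht)
    have ht : t.numNodes = n := by simpa using ht
    exact h.trans ht
  · intro t ht t' ht' h
    exact F_inj t t' (nn t ht) (nn t' ht') h

/-! Upper bound -/

noncomputable def r : ℝ≥0 := 51 / 200

def mk : ℕ ⊕ (Tm ⊕ ((Tm × Tm) ⊕ (Tm × Subst))) → Tm
  | .inl k => .idx k
  | .inr (.inl a) => .lam a
  | .inr (.inr (.inl (a, b))) => .app a b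
  | .inr (.inr (.inr (a, s))) => .clos a s

theorem mk_surj : Function.Surjective mk := by
  intro a
  cases a with
  | idx k => exact ⟨.inl k, rfl⟩
  | lam a => exact ⟨.inr (.inl a), rfl⟩
  | app a b => exact ⟨.inr (.inr (.inl (a, b))), rfl⟩
  | clos a s => exact ⟨.inr (.inr (.inr (a, s))), rfl⟩

def mkS : Tm ⊕ (Subst ⊕ Unit) → Subst
  | .inl a => .slash a
  | .inr (.inl s) => .lift s
  | .inr (.inr _) => .shift

theorem mkS_surj : Function.Surjective mkS := by
  intro a
  cases a with
  | slash a => exact ⟨.inl a, rfl⟩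
  | lift a => exact ⟨.inr (.inl a), rfl⟩
  | shift => exact ⟨.inr (.inr ()), rfl⟩

theorem tsum_sum' {α β : Type} (f : α ⊕ β → ℝ≥0∞) :
    ∑' x, f x = ∑' a, f (.inl a) + ∑' b, f (.inr b) :=
  Summable.tsum_sum ENNReal.summable ENNReal.summable

theorem tsum_mul' {α β : Type} (f : α → ℝ≥0∞) (h : β → ℝ≥0∞) :
    ∑' p : α × β, (r : ℝ≥0∞) * (f p.1 * h p.2) = r * ((∑' a, f a) * ∑' b, h b) := by
  rw [ENNReal.tsum_mul_left, ENNReal.tsum_prod (f := fun a b => f a * h b)]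
  simp_rw [ENNReal.tsum_mul_left, ENNReal.tsum_mul_right]

theorem geom : ∑' k : ℕ, (r : ℝ≥0∞) ^ (k + 1) = ((51 / 149 : ℝ≥0) : ℝ≥0∞) := by
  have h1 : HasSum (fun k : ℕ => r ^ (k + 1)) (51 / 149 : ℝ≥0) := by
    rw [← NNReal.hasSum_coe]
    have := (hasSum_geometric_of_lt_one (r := (51 / 200 : ℝ)) (by norm_num)
      (by norm_num)).mul_left (51 / 200 : ℝ)
    have e1 : (fun k : ℕ => ((r ^ (k + 1) : ℝ≥0) : ℝ)) =
        fun k => (51 / 200 : ℝ) * (51 / 200) ^ k := by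
      ext k; simp [r, pow_succ']
    have e2 : ((51 / 149 : ℝ≥0) : ℝ) = (51 / 200 : ℝ) * (1 - 51 / 200)⁻¹ := by
      push_cast; norm_num
    rw [e1, e2]
    exact this
  have := ENNReal.tsum_coe_eq h1
  simpa using this

theorem stepT (f p : Tm → ℝ≥0∞) (q : Subst → ℝ≥0∞)
    (h1 : ∀ k, f (.idx k) ≤ (r : ℝ≥0∞) ^ (k + 1)) (h2 : ∀ a, f (.lam a) ≤ r * p a)
    (h3 : ∀ a b, f (.app a b) ≤ r * (p a * p b)) (h4 : ∀ a s, f (.clos a s) ≤ r * (p a * q s))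
    (x y z : ℝ≥0) (hp : ∑' a, p a ≤ x) (hq : ∑' s, q s ≤ y)
    (hz : 51 / 149 + (r * x + (r * (x * x) + r * (x * y))) ≤ z) : ∑' a, f a ≤ z := by
  refine (ENNReal.tsum_le_tsum_comp_of_surjective mk_surj f).trans ?_
  rw [tsum_sum', tsum_sum', tsum_sum']
  refine le_trans ?_ (ENNReal.coe_le_coe.2 hz)
  push_cast
  refine add_le_add ?_ (add_le_add ?_ (add_le_add ?_ ?_))
  · refine (ENNReal.tsum_le_tsum (fun k => h1 k)).trans ?_
    rw [geom]
  · refine (ENNReal.tsum_le_tsum (fun k => h2 k)).trans ?_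
    rw [ENNReal.tsum_mul_left]; gcongr
  · refine (ENNReal.tsum_le_tsum (fun k : Tm × Tm => h3 k.1 k.2)).trans ?_
    rw [tsum_mul']; gcongr
  · refine (ENNReal.tsum_le_tsum (fun k : Tm × Subst => h4 k.1 k.2)).trans ?_
    rw [tsum_mul']; gcongr

theorem stepS (f : Subst → ℝ≥0∞) (p : Tm → ℝ≥0∞) (q : Subst → ℝ≥0∞)
    (h1 : ∀ a, f (.slash a) ≤ r * p a) (h2 : ∀ s, f (.lift s) ≤ r * q s)
    (h3 : f .shift ≤ r)
    (x y z : ℝ≥0) (hp : ∑' a, p a ≤ x) (hq : ∑' s, q s ≤ y)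
    (hz : r * x + (r * y + r) ≤ z) : ∑' a, f a ≤ z := by
  refine (ENNReal.tsum_le_tsum_comp_of_surjective mkS_surj f).trans ?_
  rw [tsum_sum', tsum_sum']
  refine le_trans ?_ (ENNReal.coe_le_coe.2 hz)
  push_cast
  refine add_le_add ?_ (add_le_add ?_ ?_)
  · refine (ENNReal.tsum_le_tsum (fun k => h1 k)).trans ?_
    rw [ENNReal.tsum_mul_left]; gcongr
  · refine (ENNReal.tsum_le_tsum (fun k => h2 k)).trans ?_
    rw [ENNReal.tsum_mul_left]; gcongr
  · simpa [mkS] using h3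

noncomputable def wP (n : ℕ) (a : Tm) : ℝ≥0∞ :=
  if a.impure = false ∧ a.size < n then (r : ℝ≥0∞) ^ a.size else 0
noncomputable def wA (n : ℕ) (a : Tm) : ℝ≥0∞ :=
  if a.noNested = true ∧ a.size < n then (r : ℝ≥0∞) ^ a.size else 0
noncomputable def wS (n : ℕ) (a : Subst) : ℝ≥0∞ :=
  if a.noNested = true ∧ a.size < n then (r : ℝ≥0∞) ^ a.size else 0

theorem ite_le {c : Prop} [Decidable c] {x y : ℝ≥0∞} (h : c → x ≤ y) :
    (if c then x else 0) ≤ y := by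
  split_ifs with hc
  · exact h hc
  · exact zero_le

theorem boundP (n : ℕ) : ∑' a, wP n a ≤ ((572 / 1000 : ℝ≥0) : ℝ≥0∞) := by
  induction n with
  | zero => simp [wP]
  | succ n ih =>
    refine stepT _ (wP n) (fun _ => 0) ?_ ?_ ?_ ?_ _ 0 _ ih (by simp) ?_
    · intro k; exact ite_le fun _ => le_rfl
    · intro a; refine ite_le fun h => ?_
      simp only [Tm.size, Tm.impure] at h ⊢
      rw [wP, if_pos ⟨h.1, by omega⟩, pow_succ']
    · intro a b; refine ite_le fun h => ?_
      simp only [Tm.size, Tm.impure, Bool.or_eq_false_iff] at h ⊢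
      rw [wP, wP, if_pos ⟨h.1.1, by omega⟩, if_pos ⟨h.1.2, by omega⟩, pow_succ', pow_add]
    · intro a s; refine ite_le fun h => ?_
      simp [Tm.impure] at h
    · rw [← NNReal.coe_le_coe]; simp only [r]; push_cast; norm_num

theorem boundAS (n : ℕ) : ∑' a, wA n a ≤ ((119 / 100 : ℝ≥0) : ℝ≥0∞) ∧
    ∑' s, wS n s ≤ ((5381 / 10000 : ℝ≥0) : ℝ≥0∞) := by
  induction n with
  | zero => simp [wA, wS]
  | succ n ih =>
    constructor
    · refine stepT _ (wA n) (wS n) ?_ ?_ ?_ ?_ _ _ _ ih.1 ih.2 ?_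
      · intro k; exact ite_le fun _ => le_rfl
      · intro a; refine ite_le fun h => ?_
        simp only [Tm.size, Tm.noNested] at h ⊢
        rw [wA, if_pos ⟨h.1, by omega⟩, pow_succ']
      · intro a b; refine ite_le fun h => ?_
        simp only [Tm.size, Tm.noNested, Bool.and_eq_true] at h ⊢
        rw [wA, wA, if_pos ⟨h.1.1, by omega⟩, if_pos ⟨h.1.2, by omega⟩, pow_succ', pow_add]
      · intro a s; refine ite_le fun h => ?_
        simp only [Tm.size, Tm.noNested, Bool.and_eq_true] at h ⊢
        rw [wA, wS, if_pos ⟨h.1.1, by omega⟩, if_pos ⟨h.1.2, by omega⟩, pow_succ', pow_add]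
      · rw [← NNReal.coe_le_coe]; simp only [r]; push_cast; norm_num
    · refine stepS _ (wP n) (wS n) ?_ ?_ ?_ _ _ _ (boundP n) ih.2 ?_
      · intro a; refine ite_le fun h => ?_
        simp only [Subst.size, Subst.noNested, Bool.and_eq_true, Bool.not_eq_true'] at h ⊢
        rw [wP, if_pos ⟨h.1.1, by omega⟩, pow_succ']
      · intro a; refine ite_le fun h => ?_
        simp only [Subst.size, Subst.noNested] at h ⊢
        rw [wS, if_pos ⟨h.1, by omega⟩, pow_succ']
      · exact ite_le fun h => by simp [Subst.size]
      · rw [← NNReal.coe_le_coe]; simp only [r]; push_cast; norm_num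

theorem tbar_le (n : ℕ) : (tbar n : ℝ) * (51 / 200 : ℝ) ^ n ≤ 119 / 100 := by
  have hf : {a : Tm | a.size = n ∧ a.noNested = true}.Finite :=
    (fin_size n).subset fun a ha => ha.1
  have h1 : tbar n = hf.toFinset.card := by
    rw [← Set.ncard_eq_toFinset_card _ hf]; rfl
  have h2 := (ENNReal.sum_le_tsum (f := wA (n + 1)) hf.toFinset).trans (boundAS (n + 1)).1
  have h3 : ∑ a ∈ hf.toFinset, wA (n + 1) a = ∑ a ∈ hf.toFinset, (r : ℝ≥0∞) ^ n := by
    refine Finset.sum_congr rfl fun a ha => ?_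
    have ha : a.size = n ∧ a.noNested = true := by simpa using ha
    rw [wA, if_pos ⟨ha.2, by omega⟩, ha.1]
  rw [h3, Finset.sum_const, nsmul_eq_mul, ← h1] at h2
  have h4 : (tbar n : ℝ≥0) * r ^ n ≤ 119 / 100 := by
    exact_mod_cast h2
  have h5 := NNReal.coe_le_coe.2 h4
  simpa [r] using h5

theorem ratio_le (n : ℕ) (hn : 0 < n) :
    (tbar n : ℝ) / (tcount n : ℝ) ≤
      119 / 100 * (2 * ((n : ℝ) ^ 2 * (50 / 51) ^ n) + 2 * ((n : ℝ) ^ 1 * (50 / 51) ^ n)) := by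
  have h1 : (4 : ℝ) ^ n ≤ 2 * n * ((n + 1) * tcount n) := by
    have h := Nat.four_pow_le_two_mul_self_mul_centralBinom n hn
    rw [← succ_mul_catalan_eq_centralBinom] at h
    have h' := h.trans (Nat.mul_le_mul_left (2 * n)
      (Nat.mul_le_mul_left (n + 1) (catalan_le n hn)))
    exact_mod_cast h'
  have h2 := tbar_le n
  have hpos : (0 : ℝ) < tcount n := by
    by_contra hc
    have h0 : (tcount n : ℝ) = 0 := le_antisymm (not_lt.1 hc) (Nat.cast_nonneg _)
    rw [h0] at h1
    have : (0 : ℝ) < 4 ^ n := by positivity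
    simp at h1
    linarith
  rw [div_le_iff₀ hpos]
  have e1 : (51 / 200 : ℝ) ^ n * ((50 / 51) ^ n * 4 ^ n) = 1 := by
    rw [← mul_pow, ← mul_pow]; norm_num
  set x : ℝ := (50 / 51 : ℝ) ^ n with hx
  have hx0 : 0 < x := by positivity
  calc (tbar n : ℝ) = (tbar n * (51 / 200 : ℝ) ^ n) * (x * 4 ^ n) := by
        rw [mul_assoc, e1, mul_one]
    _ ≤ 119 / 100 * (x * (2 * n * ((n + 1) * tcount n))) := by gcongr
    _ = _ := by ring

end Nest

/-- asymptotically almost all λυ-terms contain a nested substitution. -/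
theorem stmt10 :
    Tendsto (fun n : ℕ => (tbar n : ℝ) / (tcount n : ℝ)) atTop (nhds 0) := by
  have t1 := tendsto_pow_const_mul_const_pow_of_lt_one 1 (r := (50 / 51 : ℝ)) (by norm_num)
    (by norm_num)
  have t2 := tendsto_pow_const_mul_const_pow_of_lt_one 2 (r := (50 / 51 : ℝ)) (by norm_num)
    (by norm_num)
  have t3 := ((t2.const_mul 2).add (t1.const_mul 2)).const_mul (119 / 100)
  simp only [mul_zero, add_zero] at t3
  refine tendsto_of_tendsto_of_tendsto_of_le_of_le' tendsto_const_nhds t3 ?_ ?_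
  · exact Eventually.of_forall fun n => by positivity
  · filter_upwards [eventually_gt_atTop 0] with n hn
    exact Nest.ratio_le n hn
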